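/- Let {A^k}_{k≥0} be a greedy HOOI sequence. Then every block-nondegenerate limit point of {A^k} is a critical point and a block-wise maximizer. -/

import Mathlib

open Matrix BigOperators Filter

def froSq {ι κ : Type*} [Fintype ι] [Fintype κ] (M : Matrix ι κ ℝ) : ℝ :=
  ∑ i, ∑ j, (M i j) ^ 2

noncomputable def fro {ι κ : Type*} [Fintype ι] [Fintype κ] (M : Matrix ι κ ℝ) : ℝ :=
  Real.sqrt (froSq M)

noncomputable def eigList {m : ℕ} {κ : Type*} [Fintype κ] (Y : Matrix (Fin m) κ ℝ) : List ℝ :=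
  ((((Finset.univ : Finset (Fin m)).val.map
      (fun j => (Matrix.isHermitian_mul_conjTranspose_self Y).eigenvalues j)).sort (· ≤ ·)).reverse)

noncomputable def sval {m : ℕ} {κ : Type*} [Fintype κ] (Y : Matrix (Fin m) κ ℝ) (i : ℕ) : ℝ :=
  Real.sqrt ((eigList Y).getD (i - 1) 0)

/-- Feasibility: every factor matrix has orthonormal columns. -/
def TFeas {N : ℕ} {I r : Fin N → ℕ}
    (A : (n : Fin N) → Matrix (Fin (I n)) (Fin (r n)) ℝ) : Prop :=
  ∀ n, (A n)ᵀ * A n = 1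

/-- `Gₙ(A) = unfoldₙ(X ×₁ A₁ᵀ ⋯ ×_{n−1} A_{n−1}ᵀ ×_{n+1} A_{n+1}ᵀ ⋯ ×_N A_Nᵀ)`. -/
noncomputable def Gmat {N : ℕ} {I r : Fin N → ℕ} (X : ((n : Fin N) → Fin (I n)) → ℝ)
    (A : (n : Fin N) → Matrix (Fin (I n)) (Fin (r n)) ℝ) (n : Fin N) :
    Matrix (Fin (I n)) ((m : {m : Fin N // m ≠ n}) → Fin (r m.1)) ℝ :=
  fun j c => ∑ idx : ((m : {m : Fin N // m ≠ n}) → Fin (I m.1)),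
    X (fun i => if h : i = n then Fin.cast (by rw [h]) j else idx ⟨i, h⟩) *
      ∏ m : {m : Fin N // m ≠ n}, A m.1 (idx m) (c m)

/-- `f(A) = ‖X ×₁ A₁ᵀ ⋯ ×_N A_Nᵀ‖_F²`. -/
noncomputable def fval {N : ℕ} {I r : Fin N → ℕ} (X : ((n : Fin N) → Fin (I n)) → ℝ)
    (A : (n : Fin N) → Matrix (Fin (I n)) (Fin (r n)) ℝ) : ℝ :=
  ∑ c : ((n : Fin N) → Fin (r n)),
    (∑ idx : ((n : Fin N) → Fin (I n)), X idx * ∏ n, A n (idx n) (c n)) ^ 2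

/-- A critical point: `Gₙ(A)Gₙ(A)ᵀAₙ = AₙAₙᵀGₙ(A)Gₙ(A)ᵀAₙ` for all `n`. -/
def Critical {N : ℕ} {I r : Fin N → ℕ} (X : ((n : Fin N) → Fin (I n)) → ℝ)
    (A : (n : Fin N) → Matrix (Fin (I n)) (Fin (r n)) ℝ) : Prop :=
  ∀ n, Gmat X A n * (Gmat X A n)ᵀ * A n =
    A n * (A n)ᵀ * (Gmat X A n * (Gmat X A n)ᵀ * A n)

/-- A block-wise maximizer. -/
def BlockMax {N : ℕ} {I r : Fin N → ℕ} (X : ((n : Fin N) → Fin (I n)) → ℝ)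
    (A : (n : Fin N) → Matrix (Fin (I n)) (Fin (r n)) ℝ) : Prop :=
  ∀ n, ∀ B : Matrix (Fin (I n)) (Fin (r n)) ℝ, Bᵀ * B = 1 →
    froSq (Bᵀ * Gmat X A n) ≤ froSq ((A n)ᵀ * Gmat X A n)

/-- Block-nondegeneracy: `σ_{rₙ}(Gₙ(A)) > σ_{rₙ+1}(Gₙ(A))` for all `n`. -/
def NonDeg {N : ℕ} {I r : Fin N → ℕ} (X : ((n : Fin N) → Fin (I n)) → ℝ)
    (A : (n : Fin N) → Matrix (Fin (I n)) (Fin (r n)) ℝ) : Prop :=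
  ∀ n, sval (Gmat X A n) (r n + 1) < sval (Gmat X A n) (r n)

/-- The hybrid tuple used in HOOI: the already-updated blocks `i < n` come from
`Anew`, the rest from `Aold`. -/
def hyb {N : ℕ} {I r : Fin N → ℕ}
    (Aold Anew : (n : Fin N) → Matrix (Fin (I n)) (Fin (r n)) ℝ) (n : Fin N) :
    (i : Fin N) → Matrix (Fin (I i)) (Fin (r i)) ℝ :=
  fun i => if i < n then Anew i else Aold i

/-- `Gₙ^k = unfoldₙ(X ×₁ (A₁^{k+1})ᵀ ⋯ ×_{n−1} (A_{n−1}^{k+1})ᵀ ×_{n+1} (A_{n+1}^k)ᵀ ⋯ ×_N (A_N^k)ᵀ)`. -/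
noncomputable def Gseq {N : ℕ} {I r : Fin N → ℕ} (X : ((n : Fin N) → Fin (I n)) → ℝ)
    (A : ℕ → (n : Fin N) → Matrix (Fin (I n)) (Fin (r n)) ℝ) (k : ℕ) (n : Fin N) :
    Matrix (Fin (I n)) ((m : {m : Fin N // m ≠ n}) → Fin (r m.1)) ℝ :=
  Gmat X (hyb (A k) (A (k + 1)) n) n

/-- A HOOI sequence. -/
def IsHOOI {N : ℕ} {I r : Fin N → ℕ} (X : ((n : Fin N) → Fin (I n)) → ℝ)
    (A : ℕ → (n : Fin N) → Matrix (Fin (I n)) (Fin (r n)) ℝ) : Prop :=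
  (∀ k, TFeas (A k)) ∧
  ∀ k (n : Fin N), ∀ B : Matrix (Fin (I n)) (Fin (r n)) ℝ, Bᵀ * B = 1 →
    froSq (Bᵀ * Gseq X A k n) ≤ froSq ((A (k + 1) n)ᵀ * Gseq X A k n)

/-- A greedy HOOI sequence. -/
def IsGreedyHOOI {N : ℕ} {I r : Fin N → ℕ} (X : ((n : Fin N) → Fin (I n)) → ℝ)
    (A : ℕ → (n : Fin N) → Matrix (Fin (I n)) (Fin (r n)) ℝ) : Prop :=
  IsHOOI X A ∧
  ∀ k (n : Fin N), ∀ B : Matrix (Fin (I n)) (Fin (r n)) ℝ, Bᵀ * B = 1 →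
    (∀ C : Matrix (Fin (I n)) (Fin (r n)) ℝ, Cᵀ * C = 1 →
      froSq (Cᵀ * Gseq X A k n) ≤ froSq (Bᵀ * Gseq X A k n)) →
    fro (A (k + 1) n - A k n) ≤ fro (B - A k n)

/-- `Ā` is a limit point of the sequence `{A^k}` (blockwise in Frobenius norm). -/
def IsLimitPt {N : ℕ} {I r : Fin N → ℕ}
    (A : ℕ → (n : Fin N) → Matrix (Fin (I n)) (Fin (r n)) ℝ)
    (Abar : (n : Fin N) → Matrix (Fin (I n)) (Fin (r n)) ℝ) : Prop :=
  ∃ φ : ℕ → ℕ, StrictMono φ ∧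
    ∀ n, Tendsto (fun k => fro (A (φ k) n - Abar n)) atTop (nhds 0)

/-- `‖A − B‖_F = √(∑ₙ ‖Aₙ − Bₙ‖_F²)` on tuples. -/
noncomputable def tdist {N : ℕ} {I r : Fin N → ℕ}
    (A B : (n : Fin N) → Matrix (Fin (I n)) (Fin (r n)) ℝ) : ℝ :=
  Real.sqrt (∑ n, froSq (A n - B n))

/-- A local maximizer of `f` over the feasible set. -/
def LocalMax {N : ℕ} {I r : Fin N → ℕ} (X : ((n : Fin N) → Fin (I n)) → ℝ)
    (A : (n : Fin N) → Matrix (Fin (I n)) (Fin (r n)) ℝ) : Prop :=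
  TFeas A ∧ ∃ ε > (0 : ℝ), ∀ B : (n : Fin N) → Matrix (Fin (I n)) (Fin (r n)) ℝ,
    TFeas B → tdist B A ≤ ε → fval X B ≤ fval X A

/-- A globally optimal solution. -/
def GlobalMax {N : ℕ} {I r : Fin N → ℕ} (X : ((n : Fin N) → Fin (I n)) → ℝ)
    (A : (n : Fin N) → Matrix (Fin (I n)) (Fin (r n)) ℝ) : Prop :=
  TFeas A ∧ ∀ B : (n : Fin N) → Matrix (Fin (I n)) (Fin (r n)) ℝ,
    TFeas B → fval X B ≤ fval X A


lemma froSq_eq_trace {ι κ : Type*} [Fintype ι] [Fintype κ] (M : Matrix ι κ ℝ) :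
    froSq M = (M * Mᵀ).trace := by
  simp [froSq, Matrix.trace, Matrix.mul_apply, pow_two]

lemma froSq_nonneg {ι κ : Type*} [Fintype ι] [Fintype κ] (M : Matrix ι κ ℝ) : 0 ≤ froSq M :=
  Finset.sum_nonneg fun _ _ => Finset.sum_nonneg fun _ _ => sq_nonneg _

/-- In eigencoordinates. -/
lemma froSq_eig {m r : ℕ} {κ : Type*} [Fintype κ] (G : Matrix (Fin m) κ ℝ)
    (U : Matrix (Fin m) (Fin m) ℝ) (d : Fin m → ℝ) (hG : G * Gᵀ = U * diagonal d * Uᵀ)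
    (B : Matrix (Fin m) (Fin r) ℝ) :
    froSq (Bᵀ * G) = ∑ j, d j * ∑ i, ((Uᵀ * B) j i) ^ 2 := by
  have h : (Bᵀ * G) * (Bᵀ * G)ᵀ = (Uᵀ * B)ᵀ * (diagonal d * (Uᵀ * B)) := by
    rw [transpose_mul, transpose_transpose, Matrix.mul_assoc, ← Matrix.mul_assoc G, hG]
    simp only [transpose_mul, transpose_transpose, Matrix.mul_assoc]
  rw [froSq_eq_trace, h, Matrix.trace_mul_comm]
  generalize Uᵀ * B = V
  rw [Matrix.mul_assoc]
  simp only [Matrix.trace, Matrix.diag, diagonal_mul]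
  refine Finset.sum_congr rfl fun j _ => ?_
  rw [Matrix.mul_apply]
  simp [pow_two]

/-- A maximizer spans the top eigenspace. -/
lemma top_proj {m r : ℕ} {κ : Type*} [Fintype κ] (G : Matrix (Fin m) κ ℝ)
    (U : Matrix (Fin m) (Fin m) ℝ) (d : Fin m → ℝ) (hG : G * Gᵀ = U * diagonal d * Uᵀ)
    (hU : Uᵀ * U = 1) (hU' : U * Uᵀ = 1)
    (a : ℝ) (hT : (Finset.univ.filter fun j => a ≤ d j).card = r)
    (B : Matrix (Fin m) (Fin r) ℝ) (hB : Bᵀ * B = 1)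
    (hmax : ∀ C : Matrix (Fin m) (Fin r) ℝ, Cᵀ * C = 1 → froSq (Cᵀ * G) ≤ froSq (Bᵀ * G)) :
    B * Bᵀ = U * diagonal (fun j => if a ≤ d j then 1 else 0) * Uᵀ := by
  classical
  set T := Finset.univ.filter fun j => a ≤ d j with hTdef
  let e : Fin r ≃ T := (T.equivFinOfCardEq hT).symm
  -- comparison matrix
  let E : Matrix (Fin m) (Fin r) ℝ := fun j c => if j = (e c : Fin m) then 1 else 0
  have hEE : Eᵀ * E = 1 := by
    ext c c'
    rw [Matrix.mul_apply]
    have : ∀ x, Eᵀ c x * E x c' =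
        if x = (e c : Fin m) then (if c = c' then 1 else 0) else 0 := by
      intro x
      rw [Matrix.transpose_apply]
      simp only [E]
      by_cases hx : x = (e c : Fin m)
      · simp [hx, Subtype.val_inj]
      · simp [hx]
    rw [Finset.sum_congr rfl fun x _ => this x]
    simp [Matrix.one_apply]
  have hC : (U * E)ᵀ * (U * E) = 1 := by
    rw [transpose_mul, Matrix.mul_assoc, ← Matrix.mul_assoc Uᵀ, hU, Matrix.one_mul, hEE]
  have h1 := hmax _ hC
  rw [froSq_eig G U d hG, froSq_eig G U d hG, ← Matrix.mul_assoc, hU, Matrix.one_mul] at h1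
  set V := Uᵀ * B with hVdef
  have hVV : Vᵀ * V = 1 := by
    rw [hVdef, transpose_mul, transpose_transpose, Matrix.mul_assoc, ← Matrix.mul_assoc U, hU',
      Matrix.one_mul, hB]
  set w : Fin m → ℝ := fun j => ∑ i, (V j i) ^ 2 with hw
  have hE : ∑ j, d j * ∑ i, (E j i) ^ 2 = ∑ j ∈ T, d j := by
    simp only [Finset.mul_sum]
    rw [Finset.sum_comm, ← Finset.sum_coe_sort T, ← Equiv.sum_comp e]
    refine Finset.sum_congr rfl fun c _ => ?_
    simp [E]
  rw [hE] at h1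
  have hw0 : ∀ j, 0 ≤ w j := fun j => Finset.sum_nonneg fun _ _ => sq_nonneg _
  have hwV : ∀ j, w j = (V * Vᵀ) j j := fun j => by simp [hw, Matrix.mul_apply, pow_two]
  have hP : (1 - V * Vᵀ)ᵀ * (1 - V * Vᵀ) = 1 - V * Vᵀ := by
    have : V * Vᵀ * (V * Vᵀ) = V * Vᵀ := by
      rw [Matrix.mul_assoc, ← Matrix.mul_assoc Vᵀ, hVV, Matrix.one_mul]
    simp [Matrix.sub_mul, Matrix.mul_sub, this]
  have hPj : ∀ j, 1 - w j = ∑ i, ((1 - V * Vᵀ : Matrix (Fin m) (Fin m) ℝ) i j) ^ 2 := fun j => by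
    have := congrFun (congrFun hP j) j
    rw [Matrix.mul_apply] at this
    simp only [Matrix.transpose_apply] at this
    rw [hwV]
    simpa [pow_two] using this.symm
  have hw1 : ∀ j, 0 ≤ 1 - w j := fun j => by
    rw [hPj]; exact Finset.sum_nonneg fun _ _ => sq_nonneg _
  have hsum : ∑ j, w j = r := by
    have : ∑ j, w j = (V * Vᵀ).trace := by simp [Matrix.trace, hwV]
    rw [this, Matrix.trace_mul_comm, hVV]; simp
  let z : Fin m → ℝ := fun j => if a ≤ d j then (d j - a) * (1 - w j) else (a - d j) * w j
  have hz0 : ∀ j, 0 ≤ z j := fun j => by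
    simp only [z]; split_ifs with h
    · exact mul_nonneg (by linarith) (hw1 j)
    · exact mul_nonneg (by push Not at h; linarith) (hw0 j)
  have hzsum : ∑ j, z j ≤ 0 := by
    have : ∀ j, z j = (if a ≤ d j then d j - a else 0) - d j * w j + a * w j := fun j => by
      simp only [z]; split_ifs <;> ring
    simp only [this, Finset.sum_add_distrib, Finset.sum_sub_distrib, ← Finset.mul_sum, hsum]
    rw [← Finset.sum_filter, Finset.sum_sub_distrib]
    simp only [Finset.sum_const, ← hTdef, hT, nsmul_eq_mul]
    have : ∑ j, d j * ∑ i, V j i ^ 2 = ∑ j, d j * w j := rfl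
    linarith
  have hz : ∀ j, z j = 0 := fun j =>
    (Finset.sum_eq_zero_iff_of_nonneg fun j _ => hz0 j).1
      (le_antisymm hzsum (Finset.sum_nonneg fun j _ => hz0 j)) j (Finset.mem_univ j)
  have hoff : ∀ j, ¬ a ≤ d j → w j = 0 := fun j hj => by
    have := hz j
    simp only [z, hj, if_false] at this
    push Not at hj
    rcases mul_eq_zero.1 this with h | h
    · linarith
    · exact h
  have hon : ∀ j, a ≤ d j → 1 - w j = 0 := by
    have hs : ∑ j ∈ T, (1 - w j) = 0 := by
      have h2 : ∑ j ∈ T, w j = r := by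
        rw [← hsum, hTdef, Finset.sum_filter]
        refine Finset.sum_congr rfl fun j _ => ?_
        split_ifs with h
        · rfl
        · exact (hoff j h).symm
      rw [Finset.sum_sub_distrib, h2]; simp [hT]
    intro j hj
    exact (Finset.sum_eq_zero_iff_of_nonneg fun j _ => hw1 j).1 hs j (by simp [T, hj])
  have hV : V * Vᵀ = diagonal (fun j => if a ≤ d j then 1 else 0) := by
    ext i j
    by_cases h : a ≤ d j
    · have h3 := hon j h
      rw [hPj] at h3
      have h4 := (Finset.sum_eq_zero_iff_of_nonneg fun i _ => sq_nonneg _).1 h3 i (Finset.mem_univ i)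
      have h5 : (1 - V * Vᵀ : Matrix (Fin m) (Fin m) ℝ) i j = 0 := by simpa using h4
      rw [Matrix.sub_apply, sub_eq_zero] at h5
      rw [← h5, Matrix.one_apply, Matrix.diagonal_apply]
      by_cases hij : i = j
      · subst hij; simp [h]
      · simp [hij]
    · have h3 := hoff j h
      have h4 : ∀ c, V j c = 0 := fun c => by
        have := (Finset.sum_eq_zero_iff_of_nonneg fun i _ => sq_nonneg _).1 h3 c (Finset.mem_univ c)
        simpa using this
      rw [Matrix.mul_apply, Matrix.diagonal_apply]
      by_cases hij : i = j
      · subst hij; simp [h, h4]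
      · simp [hij, h4]
  rw [← hV, hVdef, transpose_mul, transpose_transpose]
  have : U * (Uᵀ * B * (Bᵀ * U)) * Uᵀ = (U * Uᵀ) * (B * Bᵀ) * (U * Uᵀ) := by
    simp only [Matrix.mul_assoc]
  rw [this, hU']; simp

lemma card_top {m r : ℕ} (hr : r ≤ m) (d : Fin m → ℝ) (L : List ℝ)
    (hL : L = (((Finset.univ : Finset (Fin m)).val.map d).sort (· ≤ ·)).reverse)
    (hgap : √(L.getD r 0) < √(L.getD (r - 1) 0)) :
    (Finset.univ.filter fun j => L.getD (r - 1) 0 ≤ d j).card = r := by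
  have hgap' : L.getD r 0 < L.getD (r - 1) 0 := by
    by_contra h
    push Not at h
    exact absurd (Real.sqrt_le_sqrt h) (not_le.2 hgap)
  have hr1 : 1 ≤ r := by
    rcases Nat.eq_zero_or_pos r with h | h
    · subst h; simp at hgap'
    · exact h
  set a := L.getD (r - 1) 0 with ha
  have hms : (L : Multiset ℝ) = (Finset.univ : Finset (Fin m)).val.map d := by
    rw [hL, Multiset.coe_reverse, Multiset.sort_eq]
  have hlen : L.length = m := by
    have := congrArg Multiset.card hms
    simpa using this
  have hsorted : L.Pairwise (fun x y => y ≤ x) := by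
    rw [hL, List.pairwise_reverse]
    exact Multiset.pairwise_sort _ _
  have hmono : ∀ i j (hi : i < L.length) (hj : j < L.length), i ≤ j → L[j] ≤ L[i] := by
    intro i j hi hj hij
    rcases hij.eq_or_lt with h | h
    · subst h; exact le_rfl
    · exact List.pairwise_iff_getElem.1 hsorted i j hi hj h
  have hcount : L.countP (fun x => decide (a ≤ x)) = r := by
    rw [← List.take_append_drop r L, List.countP_append]
    have h1 : (L.take r).countP (fun x => decide (a ≤ x)) = r := by
      have : (L.take r).countP (fun x => decide (a ≤ x)) = (L.take r).length := by
        rw [List.countP_eq_length]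
        intro x hx
        obtain ⟨i, hi, rfl⟩ := List.getElem_of_mem hx
        simp only [List.length_take] at hi
        rw [List.getElem_take]
        simp only [decide_eq_true_eq]
        rw [ha, List.getD_eq_getElem _ _ (by omega)]
        exact hmono _ _ _ _ (by omega)
      rw [this, List.length_take]; omega
    have h2 : (L.drop r).countP (fun x => decide (a ≤ x)) = 0 := by
      rw [List.countP_eq_zero]
      intro x hx
      obtain ⟨i, hi, rfl⟩ := List.getElem_of_mem hx
      simp only [List.length_drop] at hi
      rw [List.getElem_drop]
      simp only [decide_eq_true_eq, not_le]
      rw [List.getD_eq_getElem _ _ (by omega)] at hgap'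
      exact lt_of_le_of_lt (hmono r (r + i) (by omega) (by omega) (by omega)) hgap'
    rw [h1, h2, Nat.add_zero]
  have h3 := congrArg (Multiset.countP (fun x => a ≤ x)) hms
  rw [Multiset.coe_countP, hcount, Multiset.countP_map] at h3
  rw [h3]; rfl

lemma exists_eig {m : ℕ} {κ : Type*} [Fintype κ] (G : Matrix (Fin m) κ ℝ) :
    ∃ U : Matrix (Fin m) (Fin m) ℝ, Uᵀ * U = 1 ∧ U * Uᵀ = 1 ∧
      G * Gᵀ = U * diagonal (Matrix.isHermitian_mul_conjTranspose_self G).eigenvalues * Uᵀ := by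
  set h := Matrix.isHermitian_mul_conjTranspose_self G
  refine ⟨h.eigenvectorUnitary, ?_, ?_, ?_⟩
  · have := Unitary.coe_star_mul_self h.eigenvectorUnitary
    rwa [star_eq_conjTranspose, conjTranspose_eq_transpose_of_trivial] at this
  · have := Unitary.coe_mul_star_self h.eigenvectorUnitary
    rwa [Unitary.coe_star, star_eq_conjTranspose, conjTranspose_eq_transpose_of_trivial (h.eigenvectorUnitary : Matrix (Fin m) (Fin m) ℝ)] at this
  · have := h.spectral_theorem
    rw [Unitary.conjStarAlgAut_apply, star_eq_conjTranspose,
      conjTranspose_eq_transpose_of_trivial (h.eigenvectorUnitary : Matrix (Fin m) (Fin m) ℝ)] at this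
    exact this

/-- Nondegeneracy: all maximizers have the same projector, which commutes with `GGᵀ`. -/
lemma exists_proj {m r : ℕ} {κ : Type*} [Fintype κ] (hr : r ≤ m) (G : Matrix (Fin m) κ ℝ)
    (hgap : sval G (r + 1) < sval G r) :
    ∃ P : Matrix (Fin m) (Fin m) ℝ, G * Gᵀ * P = P * (G * Gᵀ) ∧
      ∀ B : Matrix (Fin m) (Fin r) ℝ, Bᵀ * B = 1 →
        (∀ C : Matrix (Fin m) (Fin r) ℝ, Cᵀ * C = 1 → froSq (Cᵀ * G) ≤ froSq (Bᵀ * G)) →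
        B * Bᵀ = P := by
  obtain ⟨U, hU, hU', hG⟩ := exists_eig G
  have hT := card_top hr _ (eigList G) rfl hgap
  refine ⟨_, ?_, fun B hB hmax => top_proj G U _ hG hU hU' _ hT B hB hmax⟩
  have key : ∀ D D' : Matrix (Fin m) (Fin m) ℝ,
      U * D * Uᵀ * (U * D' * Uᵀ) = U * (D * D') * Uᵀ := fun D D' => by
    have : U * D * Uᵀ * (U * D' * Uᵀ) = U * D * (Uᵀ * U) * D' * Uᵀ := by
      simp only [Matrix.mul_assoc]
    rw [this, hU]; simp only [Matrix.mul_one, Matrix.mul_assoc]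
  rw [hG, key, key, diagonal_mul_diagonal, diagonal_mul_diagonal]
  simp only [mul_comm]

lemma Gmat_congr {N : ℕ} {I r : Fin N → ℕ} (X : ((n : Fin N) → Fin (I n)) → ℝ)
    (A B : (n : Fin N) → Matrix (Fin (I n)) (Fin (r n)) ℝ) (n : Fin N)
    (h : ∀ m, m ≠ n → A m = B m) : Gmat X A n = Gmat X B n := by
  ext j c
  refine Finset.sum_congr rfl fun idx _ => ?_
  congr 1
  exact Finset.prod_congr rfl fun m _ => by rw [h m.1 m.2]

lemma fval_eq {N : ℕ} {I r : Fin N → ℕ} (X : ((n : Fin N) → Fin (I n)) → ℝ)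
    (A : (n : Fin N) → Matrix (Fin (I n)) (Fin (r n)) ℝ) (n : Fin N) :
    fval X A = froSq ((A n)ᵀ * Gmat X A n) := by
  unfold fval froSq
  rw [← (Equiv.piSplitAt n (fun i => Fin (r i))).symm.sum_comp, Fintype.sum_prod_type]
  refine Finset.sum_congr rfl fun c _ => Finset.sum_congr rfl fun c' _ => ?_
  congr 1
  rw [← (Equiv.piSplitAt n (fun i => Fin (I i))).symm.sum_comp, Fintype.sum_prod_type,
    Matrix.mul_apply]
  refine Finset.sum_congr rfl fun j _ => ?_
  rw [Matrix.transpose_apply]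
  unfold Gmat
  rw [Finset.mul_sum]
  refine Finset.sum_congr rfl fun idx _ => ?_
  rw [Fintype.prod_eq_mul_prod_subtype_ne _ n]
  have h1 : (Equiv.piSplitAt n (fun i => Fin (I i))).symm (j, idx) =
      fun i => if h : i = n then Fin.cast (by rw [h]) j else idx ⟨i, h⟩ := by
    funext i
    by_cases h : i = n
    · subst h; simp [Equiv.piSplitAt]
    · simp [Equiv.piSplitAt, h]
  have h2 : (Equiv.piSplitAt n (fun i => Fin (I i))).symm (j, idx) n = j := by
    simp [Equiv.piSplitAt]
  have h3 : (Equiv.piSplitAt n (fun i => Fin (r i))).symm (c, c') n = c := by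
    simp [Equiv.piSplitAt]
  have h4 : ∀ m : {m : Fin N // m ≠ n},
      (Equiv.piSplitAt n (fun i => Fin (I i))).symm (j, idx) m.1 = idx m := fun m => by
    simp [Equiv.piSplitAt, m.2]
  have h5 : ∀ m : {m : Fin N // m ≠ n},
      (Equiv.piSplitAt n (fun i => Fin (r i))).symm (c, c') m.1 = c' m := fun m => by
    simp [Equiv.piSplitAt, m.2]
  rw [h2, h3, Finset.prod_congr rfl fun m _ => by rw [h4 m, h5 m], h1]
  ring

lemma continuous_Gmat {N : ℕ} {I r : Fin N → ℕ} (X : ((n : Fin N) → Fin (I n)) → ℝ) (n : Fin N) :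
    Continuous (fun A : (n : Fin N) → Matrix (Fin (I n)) (Fin (r n)) ℝ => Gmat X A n) := by
  refine continuous_matrix fun j c => ?_
  unfold Gmat
  refine continuous_finsetSum _ fun idx _ => continuous_const.mul ?_
  refine continuous_finsetProd _ fun m _ => ?_
  exact (continuous_apply m.1).matrix_elem _ _

lemma continuous_froSq {ι κ : Type*} [Fintype ι] [Fintype κ] :
    Continuous (froSq : Matrix ι κ ℝ → ℝ) := by
  unfold froSq
  refine continuous_finsetSum _ fun i _ => continuous_finsetSum _ fun j _ => ?_
  exact (continuous_id.matrix_elem i j).pow 2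

lemma continuous_fval {N : ℕ} {I r : Fin N → ℕ} (X : ((n : Fin N) → Fin (I n)) → ℝ) :
    Continuous (fun A : (n : Fin N) → Matrix (Fin (I n)) (Fin (r n)) ℝ => fval X A) := by
  unfold fval
  refine continuous_finsetSum _ fun c _ => (continuous_finsetSum _ fun idx _ => ?_).pow 2
  refine continuous_const.mul (continuous_finsetProd _ fun m _ => ?_)
  exact (continuous_apply m).matrix_elem _ _

lemma fro_zero_iff {ι κ : Type*} [Fintype ι] [Fintype κ] (M : Matrix ι κ ℝ) (h : fro M ≤ 0) :
    M = 0 := by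
  have h0 : froSq M = 0 := by
    have := Real.sqrt_eq_zero'.1 (le_antisymm h (Real.sqrt_nonneg _))
    exact le_antisymm this (froSq_nonneg M)
  ext i j
  have h1 := (Finset.sum_eq_zero_iff_of_nonneg
    fun i _ => Finset.sum_nonneg fun j _ => sq_nonneg (M i j)).1 h0 i (Finset.mem_univ i)
  have h2 := (Finset.sum_eq_zero_iff_of_nonneg fun j _ => sq_nonneg (M i j)).1 h1 j
    (Finset.mem_univ j)
  simpa using h2

lemma abs_le_fro {ι κ : Type*} [Fintype ι] [Fintype κ] (M : Matrix ι κ ℝ) (i : ι) (j : κ) :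
    |M i j| ≤ fro M := by
  apply Real.abs_le_sqrt
  calc (M i j) ^ 2 ≤ ∑ j, (M i j) ^ 2 :=
        Finset.single_le_sum (f := fun j => (M i j) ^ 2) (fun _ _ => sq_nonneg _) (Finset.mem_univ j)
    _ ≤ froSq M := Finset.single_le_sum (f := fun i => ∑ j, (M i j) ^ 2)
        (fun _ _ => Finset.sum_nonneg fun _ _ => sq_nonneg _) (Finset.mem_univ i)

lemma tendsto_of_fro {ι κ α : Type*} [Fintype ι] [Fintype κ] {l : Filter α}
    (u : α → Matrix ι κ ℝ) (M : Matrix ι κ ℝ)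
    (h : Tendsto (fun k => fro (u k - M)) l (nhds 0)) : Tendsto u l (nhds M) := by
  refine tendsto_pi_nhds.2 fun i => tendsto_pi_nhds.2 fun j => ?_
  rw [tendsto_iff_dist_tendsto_zero]
  refine squeeze_zero (fun _ => dist_nonneg) (fun k => ?_) h
  rw [Real.dist_eq]
  exact abs_le_fro (u k - M) i j

lemma isCompact_stiefel (m r : ℕ) :
    IsCompact {B : Matrix (Fin m) (Fin r) ℝ | Bᵀ * B = 1} := by
  have hK : IsCompact (Set.univ.pi fun _ : Fin m => Set.univ.pi fun _ : Fin r =>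
      Set.Icc (-1 : ℝ) 1) :=
    isCompact_univ_pi fun _ => isCompact_univ_pi fun _ => isCompact_Icc
  have hcl : IsClosed {B : Matrix (Fin m) (Fin r) ℝ | Bᵀ * B = 1} := by
    have hc : Continuous fun B : Matrix (Fin m) (Fin r) ℝ => Bᵀ * B :=
      Continuous.matrix_mul (Continuous.matrix_transpose continuous_id) continuous_id
    exact isClosed_eq hc continuous_const
  have hsub : ∀ B : Matrix (Fin m) (Fin r) ℝ, Bᵀ * B = 1 → ∀ i j, B i j ∈ Set.Icc (-1 : ℝ) 1 := by
    intro B hB i j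
    have h : (Bᵀ * B) j j = 1 := by
      rw [hB, Matrix.one_apply_eq]
    rw [Matrix.mul_apply] at h
    have h1 : B i j * B i j ≤ 1 := by
      rw [← h]
      exact Finset.single_le_sum (f := fun i => Bᵀ j i * B i j)
        (fun x _ => mul_self_nonneg (B x j)) (Finset.mem_univ i)
    exact abs_le.1 (abs_le_one_iff_mul_self_le_one.2 h1)
  exact IsCompact.of_isClosed_subset hK hcl fun B hB i _ j _ => hsub B hB i j

/-- Partial sweep indexed by a natural number. -/
def sweep {N : ℕ} {I r : Fin N → ℕ}
    (A : ℕ → (n : Fin N) → Matrix (Fin (I n)) (Fin (r n)) ℝ) (k t : ℕ) :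
    (i : Fin N) → Matrix (Fin (I i)) (Fin (r i)) ℝ :=
  fun i => if i.val < t then A (k + 1) i else A k i

lemma sweep_eq_hyb {N : ℕ} {I r : Fin N → ℕ}
    (A : ℕ → (n : Fin N) → Matrix (Fin (I n)) (Fin (r n)) ℝ) (k : ℕ) (n : Fin N) :
    sweep A k n.val = hyb (A k) (A (k + 1)) n := rfl

lemma fval_sweep {N : ℕ} {I r : Fin N → ℕ} (X : ((n : Fin N) → Fin (I n)) → ℝ)
    (A : ℕ → (n : Fin N) → Matrix (Fin (I n)) (Fin (r n)) ℝ) (k : ℕ) (n : Fin N) :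
    fval X (sweep A k n.val) = froSq ((A k n)ᵀ * Gseq X A k n) := by
  rw [fval_eq X _ n]
  simp [sweep, Gseq, ← sweep_eq_hyb]

lemma fval_sweep_succ {N : ℕ} {I r : Fin N → ℕ} (X : ((n : Fin N) → Fin (I n)) → ℝ)
    (A : ℕ → (n : Fin N) → Matrix (Fin (I n)) (Fin (r n)) ℝ) (k : ℕ) (n : Fin N) :
    fval X (sweep A k (n.val + 1)) = froSq ((A (k + 1) n)ᵀ * Gseq X A k n) := by
  rw [fval_eq X _ n, Gseq, ← sweep_eq_hyb,
    Gmat_congr X (sweep A k (n.val + 1)) (sweep A k n.val) n]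
  · simp [sweep]
  · intro m hm
    have : m.val ≠ n.val := fun h => hm (Fin.ext h)
    simp only [sweep]
    congr 1
    simp only [eq_iff_iff]
    omega

lemma fval_sweep_mono {N : ℕ} {I r : Fin N → ℕ} (X : ((n : Fin N) → Fin (I n)) → ℝ)
    (A : ℕ → (n : Fin N) → Matrix (Fin (I n)) (Fin (r n)) ℝ) (hA : IsHOOI X A) (k : ℕ) :
    Monotone fun t => fval X (sweep A k t) := by
  refine monotone_nat_of_le_succ fun t => ?_
  by_cases ht : t < N
  · have h1 := fval_sweep X A k ⟨t, ht⟩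
    have h2 := fval_sweep_succ X A k ⟨t, ht⟩
    simp only at h1 h2
    rw [h1, h2]
    exact hA.2 k _ _ (hA.1 k _)
  · have : sweep A k t = sweep A k (t + 1) := by
      funext i
      have := i.2
      simp only [sweep]
      rw [if_pos (by omega), if_pos (by omega)]
    rw [this]

lemma sweep_zero {N : ℕ} {I r : Fin N → ℕ}
    (A : ℕ → (n : Fin N) → Matrix (Fin (I n)) (Fin (r n)) ℝ) (k : ℕ) : sweep A k 0 = A k := by
  funext i; simp [sweep]

lemma sweep_top {N : ℕ} {I r : Fin N → ℕ}
    (A : ℕ → (n : Fin N) → Matrix (Fin (I n)) (Fin (r n)) ℝ) (k : ℕ) :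
    sweep A k N = A (k + 1) := by
  funext i; simp [sweep]

/-- One block step in the limit. -/
lemma block_step {m r : ℕ} {κ : Type*} [Fintype κ] (hr : r ≤ m)
    (G : ℕ → Matrix (Fin m) κ ℝ) (Gb : Matrix (Fin m) κ ℝ) (hG : Tendsto G atTop (nhds Gb))
    (hgap : sval Gb (r + 1) < sval Gb r)
    (a b : ℕ → Matrix (Fin m) (Fin r) ℝ) (ab : Matrix (Fin m) (Fin r) ℝ)
    (ha : Tendsto a atTop (nhds ab)) (hab : abᵀ * ab = 1)
    (hb : ∀ k, (b k)ᵀ * b k = 1)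
    (hmax : ∀ k, ∀ C : Matrix (Fin m) (Fin r) ℝ, Cᵀ * C = 1 →
      froSq (Cᵀ * G k) ≤ froSq ((b k)ᵀ * G k))
    (hgreedy : ∀ k, ∀ C : Matrix (Fin m) (Fin r) ℝ, Cᵀ * C = 1 →
      (∀ C' : Matrix (Fin m) (Fin r) ℝ, C'ᵀ * C' = 1 →
        froSq (C'ᵀ * G k) ≤ froSq (Cᵀ * G k)) → fro (b k - a k) ≤ fro (C - a k))
    (L : ℝ) (hLa : Tendsto (fun k => froSq ((a k)ᵀ * G k)) atTop (nhds L))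
    (hLb : Tendsto (fun k => froSq ((b k)ᵀ * G k)) atTop (nhds L)) :
    (∀ C : Matrix (Fin m) (Fin r) ℝ, Cᵀ * C = 1 → froSq (Cᵀ * Gb) ≤ froSq (abᵀ * Gb)) ∧
    Gb * Gbᵀ * ab = ab * abᵀ * (Gb * Gbᵀ * ab) ∧ Tendsto b atTop (nhds ab) := by
  have hcont : ∀ (l : Filter ℕ) (u : ℕ → Matrix (Fin m) (Fin r) ℝ) (c), Tendsto u l (nhds c) →
      l ≤ atTop → Tendsto (fun k => froSq ((u k)ᵀ * G k)) l (nhds (froSq (cᵀ * Gb))) := by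
    intro l u c hu hl
    have hc : Continuous fun p : Matrix (Fin m) (Fin r) ℝ × Matrix (Fin m) κ ℝ =>
        froSq (p.1ᵀ * p.2) :=
      continuous_froSq.comp (continuous_fst.matrix_transpose.matrix_mul continuous_snd)
    have h1 : Tendsto (fun k => (u k, G k)) l (nhds (c, Gb)) := hu.prodMk_nhds (hG.mono_left hl)
    have h2 := (hc.tendsto (c, Gb)).comp h1
    simpa only [Function.comp_def] using h2
  have hLeq : froSq (abᵀ * Gb) = L := tendsto_nhds_unique (hcont _ a ab ha le_rfl) hLa
  have hM : ∀ C : Matrix (Fin m) (Fin r) ℝ, Cᵀ * C = 1 →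
      froSq (Cᵀ * Gb) ≤ froSq (abᵀ * Gb) := fun C hC => by
    rw [hLeq]
    exact le_of_tendsto_of_tendsto' (hcont _ (fun _ => C) C tendsto_const_nhds le_rfl) hLb
      fun k => hmax k C hC
  obtain ⟨P, hP, hproj⟩ := exists_proj hr Gb hgap
  have hPa := hproj ab hab hM
  refine ⟨hM, ?_, ?_⟩
  · rw [hPa, ← Matrix.mul_assoc, ← hP, ← hPa]
    simp only [Matrix.mul_assoc, hab, Matrix.mul_one]
  · refine (isCompact_stiefel m r).tendsto_nhds_of_unique_mapClusterPt
      (Filter.Eventually.of_forall hb) ?_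
    intro c hc hcl
    have hc : cᵀ * c = 1 := hc
    obtain ⟨F, hF, hbF⟩ := mapClusterPt_iff_ultrafilter.1 hcl
    have hcL : froSq (cᵀ * Gb) = L :=
      tendsto_nhds_unique (hcont _ b c hbF hF) (hLb.mono_left hF)
    have hPc := hproj c hc (fun C hC => by rw [hcL, ← hLeq]; exact hM C hC)
    -- rotate `c` to `ab`
    set Q := cᵀ * ab with hQ
    have hcQ : c * Q = ab := by
      rw [hQ, ← Matrix.mul_assoc, hPc, ← hPa, Matrix.mul_assoc, hab, Matrix.mul_one]
    have hQQ : Qᵀ * Q = 1 := by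
      rw [hQ, transpose_mul, transpose_transpose, Matrix.mul_assoc, ← hQ, hcQ, hab]
    have hQQ' : Q * Qᵀ = 1 := mul_eq_one_comm.1 hQQ
    have hrot : ∀ k, fro (b k - a k) ≤ fro (b k * Q - a k) := fun k => by
      refine hgreedy k _ ?_ fun C' hC' => ?_
      · rw [transpose_mul, Matrix.mul_assoc, ← Matrix.mul_assoc (b k)ᵀ, hb, Matrix.one_mul, hQQ]
      · have : froSq ((b k * Q)ᵀ * G k) = froSq ((b k)ᵀ * G k) := by
          rw [froSq_eq_trace, froSq_eq_trace, transpose_mul]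
          generalize (b k)ᵀ = y
          have : Qᵀ * y * G k * (Qᵀ * y * G k)ᵀ = Qᵀ * (y * G k * (y * G k)ᵀ * Q) := by
            simp only [transpose_mul, transpose_transpose, Matrix.mul_assoc]
          rw [this, Matrix.trace_mul_comm, Matrix.mul_assoc, hQQ', Matrix.mul_one]
        rw [this]
        exact hmax k C' hC'
    have hfro : Continuous (fro : Matrix (Fin m) (Fin r) ℝ → ℝ) :=
      Real.continuous_sqrt.comp continuous_froSq
    have haF := ha.mono_left hF
    have h1 : Tendsto (fun k => fro (b k - a k)) F (nhds (fro (c - ab))) :=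
      (hfro.tendsto _).comp (hbF.sub haF)
    have h2 : Tendsto (fun k => fro (b k * Q - a k)) F (nhds (fro (c * Q - ab))) := by
      have hm : Continuous fun M : Matrix (Fin m) (Fin r) ℝ => M * Q :=
        continuous_id.matrix_mul continuous_const
      exact (hfro.tendsto _).comp (((hm.tendsto c).comp hbF).sub haF)
    have h3 := le_of_tendsto_of_tendsto' h1 h2 hrot
    rw [hcQ, sub_self] at h3
    have h4 : fro (0 : Matrix (Fin m) (Fin r) ℝ) = 0 := by simp [fro, froSq]
    rw [h4] at h3
    exact sub_eq_zero.1 (fro_zero_iff _ h3)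

/-- Every block-nondegenerate limit point of a greedy HOOI
sequence is a critical point and a block-wise maximizer. -/
theorem stmt10 {N : ℕ} {I r : Fin N → ℕ} (hr : ∀ n, r n ≤ I n)
    (X : ((n : Fin N) → Fin (I n)) → ℝ)
    (A : ℕ → (n : Fin N) → Matrix (Fin (I n)) (Fin (r n)) ℝ)
    (hA : IsGreedyHOOI X A)
    (Abar : (n : Fin N) → Matrix (Fin (I n)) (Fin (r n)) ℝ)
    (hfeas : TFeas Abar) (hlim : IsLimitPt A Abar) (hnd : NonDeg X Abar) :
    Critical X Abar ∧ BlockMax X Abar := by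
  obtain ⟨φ, hφ, hconv⟩ := hlim
  have hH := hA.1
  have hconv' : ∀ n, Tendsto (fun k => A (φ k) n) atTop (nhds (Abar n)) := fun n =>
    tendsto_of_fro _ _ (hconv n)
  -- objective values converge
  have hmono : Monotone fun k => fval X (A k) := monotone_nat_of_le_succ fun k => by
    have := fval_sweep_mono X A hH k (Nat.zero_le N)
    simpa only [sweep_zero, sweep_top] using this
  have hF : Tendsto (fun k => fval X (A k)) atTop (nhds (fval X Abar)) := by
    refine (tendsto_iff_tendsto_subseq_of_monotone hmono hφ.tendsto_atTop).2 ?_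
    exact ((continuous_fval X).tendsto Abar).comp (tendsto_pi_nhds.2 hconv')
  have hS : ∀ t ≤ N, Tendsto (fun k => fval X (sweep A k t)) atTop (nhds (fval X Abar)) := by
    intro t ht
    refine tendsto_of_tendsto_of_tendsto_of_le_of_le hF (hF.comp (tendsto_add_atTop_nat 1))
      (fun k => ?_) (fun k => ?_)
    · have := fval_sweep_mono X A hH k (Nat.zero_le t)
      simpa only [sweep_zero] using this
    · have := fval_sweep_mono X A hH k ht
      simpa only [sweep_top, Function.comp_def] using this
  have main : ∀ t : ℕ, ∀ n : Fin N, n.val = t →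
      (∀ C : Matrix (Fin (I n)) (Fin (r n)) ℝ, Cᵀ * C = 1 →
        froSq (Cᵀ * Gmat X Abar n) ≤ froSq ((Abar n)ᵀ * Gmat X Abar n)) ∧
      Gmat X Abar n * (Gmat X Abar n)ᵀ * Abar n =
        Abar n * (Abar n)ᵀ * (Gmat X Abar n * (Gmat X Abar n)ᵀ * Abar n) ∧
      Tendsto (fun k => A (φ k + 1) n) atTop (nhds (Abar n)) := by
    intro t
    induction t using Nat.strong_induction_on with
    | _ t ih =>
      intro n hn
      have hG : Tendsto (fun k => Gseq X A (φ k) n) atTop (nhds (Gmat X Abar n)) := by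
        refine ((continuous_Gmat X n).tendsto Abar).comp (tendsto_pi_nhds.2 fun i => ?_)
        by_cases hi : i < n
        · simp only [hyb, hi, if_true]
          exact (ih i.val (by rw [← hn]; exact hi) i rfl).2.2
        · simp only [hyb, hi, if_false]
          exact hconv' i
      refine block_step (hr n) (fun k => Gseq X A (φ k) n) _ hG (hnd n)
        (fun k => A (φ k) n) (fun k => A (φ k + 1) n) (Abar n) (hconv' n) (hfeas n)
        (fun k => hH.1 _ n) (fun k => hH.2 (φ k) n) (fun k => hA.2 (φ k) n) (fval X Abar) ?_ ?_
      · have := (hS n.val n.2.le).comp hφ.tendsto_atTop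
        simpa only [Function.comp_def, fval_sweep] using this
      · have := (hS (n.val + 1) n.2).comp hφ.tendsto_atTop
        simpa only [Function.comp_def, fval_sweep_succ] using this
  exact ⟨fun n => (main _ n rfl).2.1, fun n => (main _ n rfl).1⟩
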